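/- Let 0 < T < T_c and ε > 0, let u(x) = u₊·tanh(μx) with u₊ = √(3(T_c/T − 1)) and μ = √(T_c − T)/(ε√2), and let f₄(v) = T_c(1−v²)/2 + T(v²/2 + v⁴/12). Then the total free energy of the profile over ℝ (with the additive constant chosen so that the density vanishes at the binodal value u₊) is finite and equals ∫_ℝ [ (f₄(u(x)) − f₄(u₊)) + (ε²/2)·u'(x)² ] dx = 2√2·ε·(T_c − T)^{3/2}/T. -/

import Mathlib

open MeasureTheory

/-!
The tanh profile solves the first-order equation `ε u' = √(2 W(u))`, where
`W = f₄ - f₄(u₊) = T / 12 * (u₊² - v²)²` is a double well. The two halves of the energy density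
therefore agree along the profile, and the density is the exact derivative `(ε Φ(u))'` for any
primitive `Φ` of `√(2 W)`. The total energy is `ε (Φ(u₊) - Φ(-u₊))`.
-/

open Filter Topology

lemma hasDerivAt_tanh (x : ℝ) : HasDerivAt Real.tanh (1 - Real.tanh x ^ 2) x := by
  have hcosh : Real.cosh x ≠ 0 := (Real.cosh_pos x).ne'
  rw [funext Real.tanh_eq_sinh_div_cosh]
  refine ((Real.hasDerivAt_sinh x).div (Real.hasDerivAt_cosh x) hcosh).congr_deriv ?_
  field_simp

lemma tanh_eq_one_sub_two_div (x : ℝ) : Real.tanh x = 1 - 2 / (Real.exp (2 * x) + 1) := by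
  rw [Real.tanh_eq, Real.exp_neg, two_mul, Real.exp_add]
  field_simp
  ring

lemma tendsto_tanh_atTop : Tendsto Real.tanh atTop (𝓝 1) := by
  have hexp : Tendsto (fun x : ℝ => Real.exp (2 * x) + 1) atTop atTop :=
    tendsto_atTop_add_const_right _ _
      (Real.tendsto_exp_atTop.comp (tendsto_id.const_mul_atTop two_pos))
  rw [funext tanh_eq_one_sub_two_div]
  simpa using (hexp.const_div_atTop 2).const_sub 1

lemma tendsto_tanh_atBot : Tendsto Real.tanh atBot (𝓝 (-1)) :=
  (tendsto_tanh_atTop.comp tendsto_neg_atBot_atTop).neg.congr fun x => by simp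

lemma integrable_of_hasDerivAt_of_nonneg {g g' : ℝ → ℝ} {m n : ℝ}
    (hderiv : ∀ x, HasDerivAt g (g' x) x) (hg' : ∀ x, 0 ≤ g' x)
    (hbot : Tendsto g atBot (𝓝 m)) (htop : Tendsto g atTop (𝓝 n)) : Integrable g' := by
  have hint (a b : ℝ) : IntervalIntegrable g' volume a b :=
    intervalIntegral.intervalIntegrable_deriv_of_nonneg
      (fun x _ => (hderiv x).continuousAt.continuousWithinAt) (fun x _ => hderiv x)
      (fun x _ => hg' x)
  have hftc (r : ℝ) : ∫ x in -r..r, ‖g' x‖ = g r - g (-r) := by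
    simp only [Real.norm_of_nonneg (hg' _)]
    exact intervalIntegral.integral_eq_sub_of_hasDerivAt (fun x _ => hderiv x) (hint _ _)
  refine integrable_of_intervalIntegral_norm_tendsto (n - m) (fun r => (hint (-r) r).1)
    tendsto_neg_atTop_atBot tendsto_id ?_
  simpa only [id, hftc, Function.comp_def] using htop.sub (hbot.comp tendsto_neg_atTop_atBot)

/-- The density of the Ginzburg–Landau (Cahn–Hilliard) free energy of a profile `u` with bulk
potential `W` and gradient coefficient `ε`. It is meaningful for differentiable `u`, since `deriv`
vanishes elsewhere. -/
noncomputable def freeEnergyDensity (W : ℝ → ℝ) (ε : ℝ) (u : ℝ → ℝ) (x : ℝ) : ℝ :=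
  W (u x) + ε ^ 2 / 2 * deriv u x ^ 2

section Equipartition

variable {W Φ u : ℝ → ℝ} {ε m n : ℝ}

lemma freeEnergyDensity_eq_of_equipartition {x : ℝ}
    (hW : W (u x) = ε ^ 2 / 2 * deriv u x ^ 2) :
    freeEnergyDensity W ε u x = (ε * deriv u x) ^ 2 := by
  rw [freeEnergyDensity, hW]
  ring

lemma hasDerivAt_freeEnergyDensity_of_equipartition {x : ℝ} (hu : DifferentiableAt ℝ u x)
    (hW : W (u x) = ε ^ 2 / 2 * deriv u x ^ 2) (hΦ : HasDerivAt Φ (ε * deriv u x) (u x)) :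
    HasDerivAt (fun y => ε * Φ (u y)) (freeEnergyDensity W ε u x) x := by
  refine ((hΦ.comp x hu.hasDerivAt).const_mul ε).congr_deriv ?_
  rw [freeEnergyDensity_eq_of_equipartition hW]
  ring

theorem integrable_freeEnergyDensity_of_equipartition (hu : Differentiable ℝ u)
    (hW : ∀ x, W (u x) = ε ^ 2 / 2 * deriv u x ^ 2)
    (hΦ : ∀ x, HasDerivAt Φ (ε * deriv u x) (u x))
    (hbot : Tendsto (fun x => Φ (u x)) atBot (𝓝 m))
    (htop : Tendsto (fun x => Φ (u x)) atTop (𝓝 n)) :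
    Integrable (freeEnergyDensity W ε u) :=
  integrable_of_hasDerivAt_of_nonneg
    (fun x => hasDerivAt_freeEnergyDensity_of_equipartition (hu x) (hW x) (hΦ x))
    (fun x => (freeEnergyDensity_eq_of_equipartition (hW x)).symm ▸ sq_nonneg _)
    (hbot.const_mul ε) (htop.const_mul ε)

theorem integral_freeEnergyDensity_of_equipartition (hu : Differentiable ℝ u)
    (hW : ∀ x, W (u x) = ε ^ 2 / 2 * deriv u x ^ 2)
    (hΦ : ∀ x, HasDerivAt Φ (ε * deriv u x) (u x))
    (hbot : Tendsto (fun x => Φ (u x)) atBot (𝓝 m))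
    (htop : Tendsto (fun x => Φ (u x)) atTop (𝓝 n)) :
    ∫ x, freeEnergyDensity W ε u x = ε * (n - m) := by
  rw [integral_of_hasDerivAt_of_tendsto
    (fun x => hasDerivAt_freeEnergyDensity_of_equipartition (hu x) (hW x) (hΦ x))
    (integrable_freeEnergyDensity_of_equipartition hu hW hΦ hbot htop)
    (hbot.const_mul ε) (htop.const_mul ε), mul_sub]

end Equipartition

/-- The tanh profile of amplitude `a` and inverse width `μ`. -/
noncomputable def tanhProfile (a μ x : ℝ) : ℝ :=
  a * Real.tanh (μ * x)

/-- The quartic double well with minima `±a`, normalized so that `√(2 W(v)) = k (a² - v²)` between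
the minima when `0 ≤ k`. -/
noncomputable def doubleWell (k a v : ℝ) : ℝ :=
  k ^ 2 / 2 * (a ^ 2 - v ^ 2) ^ 2

/-- The primitive of `√(2 W)` between the minima of `W = doubleWell k a` that vanishes at `0`. -/
noncomputable def doubleWellPrimitive (k a v : ℝ) : ℝ :=
  k * (a ^ 2 * v - v ^ 3 / 3)

section TanhProfile

variable {a k ε μ : ℝ}

lemma hasDerivAt_tanhProfile (a μ x : ℝ) :
    HasDerivAt (tanhProfile a μ) (a * μ * (1 - Real.tanh (μ * x) ^ 2)) x := by
  refine (((hasDerivAt_tanh (μ * x)).comp x (hasDerivAt_const_mul μ)).const_mul a).congr_deriv ?_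
  ring

lemma tendsto_tanhProfile_atTop (a : ℝ) (hμ : 0 < μ) :
    Tendsto (tanhProfile a μ) atTop (𝓝 a) := by
  simpa using! (tendsto_tanh_atTop.comp (tendsto_id.const_mul_atTop hμ)).const_mul a

lemma tendsto_tanhProfile_atBot (a : ℝ) (hμ : 0 < μ) :
    Tendsto (tanhProfile a μ) atBot (𝓝 (-a)) := by
  simpa using! (tendsto_tanh_atBot.comp (tendsto_id.const_mul_atBot hμ)).const_mul a

lemma mul_deriv_tanhProfile (hslope : ε * μ = k * a) (x : ℝ) :
    ε * deriv (tanhProfile a μ) x = k * (a ^ 2 - tanhProfile a μ x ^ 2) := by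
  rw [(hasDerivAt_tanhProfile a μ x).deriv, tanhProfile]
  linear_combination a * (1 - Real.tanh (μ * x) ^ 2) * hslope

lemma doubleWell_tanhProfile (hslope : ε * μ = k * a) (x : ℝ) :
    doubleWell k a (tanhProfile a μ x) = ε ^ 2 / 2 * deriv (tanhProfile a μ) x ^ 2 :=
  calc doubleWell k a (tanhProfile a μ x)
      = (k * (a ^ 2 - tanhProfile a μ x ^ 2)) ^ 2 / 2 := by rw [doubleWell]; ring
    _ = ε ^ 2 / 2 * deriv (tanhProfile a μ) x ^ 2 := by rw [← mul_deriv_tanhProfile hslope]; ring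

lemma hasDerivAt_doubleWellPrimitive (k a v : ℝ) :
    HasDerivAt (doubleWellPrimitive k a) (k * (a ^ 2 - v ^ 2)) v := by
  refine (((hasDerivAt_const_mul (a ^ 2)).sub
    ((hasDerivAt_pow 3 v).div_const 3)).const_mul k).congr_deriv ?_
  norm_num

lemma hasDerivAt_doubleWellPrimitive_tanhProfile (hslope : ε * μ = k * a) (x : ℝ) :
    HasDerivAt (doubleWellPrimitive k a) (ε * deriv (tanhProfile a μ) x) (tanhProfile a μ x) :=
  mul_deriv_tanhProfile hslope x ▸ hasDerivAt_doubleWellPrimitive k a _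

lemma tendsto_doubleWellPrimitive {l : Filter ℝ} {u : ℝ → ℝ} {v : ℝ} (k a : ℝ)
    (hu : Tendsto u l (𝓝 v)) :
    Tendsto (fun x => doubleWellPrimitive k a (u x)) l (𝓝 (doubleWellPrimitive k a v)) :=
  (hasDerivAt_doubleWellPrimitive k a v).continuousAt.tendsto.comp hu

theorem integrable_freeEnergyDensity_tanhProfile (hμ : 0 < μ) (hslope : ε * μ = k * a) :
    Integrable (freeEnergyDensity (doubleWell k a) ε (tanhProfile a μ)) :=
  integrable_freeEnergyDensity_of_equipartition
    (fun x => (hasDerivAt_tanhProfile a μ x).differentiableAt)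
    (doubleWell_tanhProfile hslope) (hasDerivAt_doubleWellPrimitive_tanhProfile hslope)
    (tendsto_doubleWellPrimitive k a (tendsto_tanhProfile_atBot a hμ))
    (tendsto_doubleWellPrimitive k a (tendsto_tanhProfile_atTop a hμ))

theorem integral_freeEnergyDensity_tanhProfile (hμ : 0 < μ) (hslope : ε * μ = k * a) :
    ∫ x, freeEnergyDensity (doubleWell k a) ε (tanhProfile a μ) x = 4 / 3 * ε * k * a ^ 3 := by
  rw [integral_freeEnergyDensity_of_equipartition
    (fun x => (hasDerivAt_tanhProfile a μ x).differentiableAt)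
    (doubleWell_tanhProfile hslope) (hasDerivAt_doubleWellPrimitive_tanhProfile hslope)
    (tendsto_doubleWellPrimitive k a (tendsto_tanhProfile_atBot a hμ))
    (tendsto_doubleWellPrimitive k a (tendsto_tanhProfile_atTop a hμ)),
    doubleWellPrimitive, doubleWellPrimitive]
  ring

end TanhProfile

/-- The quartic free energy density `f₄` at temperature `T` with critical temperature `Tc`. -/
noncomputable def quarticFreeEnergy (T Tc v : ℝ) : ℝ :=
  Tc * (1 - v ^ 2) / 2 + T * (v ^ 2 / 2 + v ^ 4 / 12)

/-- The positive binodal value `u₊` of `quarticFreeEnergy T Tc`. It is `0` by the convention for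
`Real.sqrt` when `0 < T` and `Tc < T`. -/
noncomputable def binodal (T Tc : ℝ) : ℝ :=
  √(3 * (Tc / T - 1))

section Binodal

variable {T Tc : ℝ}

lemma binodal_sq (hT : 0 < T) (hTTc : T ≤ Tc) : binodal T Tc ^ 2 = 3 * (Tc - T) / T := by
  have hratio : 1 ≤ Tc / T := (one_le_div hT).2 hTTc
  rw [binodal, Real.sq_sqrt (by linarith)]
  field_simp

lemma quarticFreeEnergy_sub_binodal (hT : 0 < T) (hTTc : T ≤ Tc) (v : ℝ) :
    quarticFreeEnergy T Tc v - quarticFreeEnergy T Tc (binodal T Tc) =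
      doubleWell √(T / 6) (binodal T Tc) v := by
  have hTc : Tc = T * (1 + binodal T Tc ^ 2 / 3) := by
    rw [binodal_sq hT hTTc]
    field_simp
    ring
  rw [quarticFreeEnergy, quarticFreeEnergy, doubleWell, Real.sq_sqrt (by positivity)]
  linear_combination (binodal T Tc ^ 2 - v ^ 2) / 2 * hTc

lemma sqrt_mul_binodal (hT : 0 < T) : √(T / 6) * binodal T Tc = √(Tc - T) / √2 := by
  rw [binodal, ← Real.sqrt_mul (by positivity), ← Real.sqrt_div' _ zero_le_two]
  congr 1
  field_simp
  ring

lemma four_thirds_mul_sqrt_mul_binodal_cube (hT : 0 < T) (hTTc : T ≤ Tc) :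
    4 / 3 * √(T / 6) * binodal T Tc ^ 3 = 2 * √2 * (Tc - T) ^ ((3 : ℝ) / 2) / T := by
  have hpow : (Tc - T) ^ ((3 : ℝ) / 2) = (Tc - T) * √(Tc - T) := by
    rw [Real.rpow_div_two_eq_sqrt _ (sub_nonneg.2 hTTc)]
    norm_cast
    rw [pow_succ, Real.sq_sqrt (sub_nonneg.2 hTTc)]
  calc 4 / 3 * √(T / 6) * binodal T Tc ^ 3
      = 4 / 3 * (√(T / 6) * binodal T Tc) * binodal T Tc ^ 2 := by ring
    _ = 4 / 3 * (√(Tc - T) / √2) * (3 * (Tc - T) / T) := by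
        rw [sqrt_mul_binodal hT, binodal_sq hT hTTc]
    _ = 2 * √2 * (Tc - T) ^ ((3 : ℝ) / 2) / T := by
        rw [hpow]
        field_simp
        rw [Real.sq_sqrt zero_le_two]
        ring

end Binodal

/-- the total free energy of the tanh profile over ℝ (normalized so that the
density vanishes at the binodal value `u₊`) is finite and equals `2√2 ε (T_c − T)^{3/2}/T`. -/
theorem tanh_profile_total_free_energy
    (T Tc ε : ℝ) (hT : 0 < T) (hTTc : T < Tc) (hε : 0 < ε)
    (uplus μ : ℝ)
    (huplus : uplus = Real.sqrt (3 * (Tc / T - 1)))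
    (hμ : μ = Real.sqrt (Tc - T) / (ε * Real.sqrt 2))
    (u : ℝ → ℝ) (hu : ∀ x, u x = uplus * Real.tanh (μ * x))
    (f₄ : ℝ → ℝ)
    (hf : ∀ v, f₄ v = Tc * (1 - v ^ 2) / 2 + T * (v ^ 2 / 2 + v ^ 4 / 12)) :
    Integrable (fun x : ℝ => (f₄ (u x) - f₄ uplus) + ε ^ 2 / 2 * (deriv u x) ^ 2) ∧
    ∫ x : ℝ, ((f₄ (u x) - f₄ uplus) + ε ^ 2 / 2 * (deriv u x) ^ 2)
      = 2 * Real.sqrt 2 * ε * (Tc - T) ^ ((3 : ℝ) / 2) / T := by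
  obtain rfl : uplus = binodal T Tc := huplus
  obtain rfl : u = tanhProfile (binodal T Tc) μ := funext hu
  obtain rfl : f₄ = quarticFreeEnergy T Tc := funext hf
  have hμ_pos : 0 < μ := by
    have := Real.sqrt_pos.2 (sub_pos.2 hTTc)
    rw [hμ]
    positivity
  have hslope : ε * μ = √(T / 6) * binodal T Tc := by
    rw [sqrt_mul_binodal hT, hμ]
    field_simp
  simp only [quarticFreeEnergy_sub_binodal hT hTTc.le]
  refine ⟨integrable_freeEnergyDensity_tanhProfile hμ_pos hslope, ?_⟩
  calc ∫ x, freeEnergyDensity (doubleWell √(T / 6) (binodal T Tc)) ε (tanhProfile _ μ) x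
      = ε * (4 / 3 * √(T / 6) * binodal T Tc ^ 3) := by
        rw [integral_freeEnergyDensity_tanhProfile hμ_pos hslope]
        ring
    _ = 2 * √2 * ε * (Tc - T) ^ ((3 : ℝ) / 2) / T := by
        rw [four_thirds_mul_sqrt_mul_binodal_cube hT hTTc.le]
        ring
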